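/- Let g be a symmetric positive definite real d×d matrix, defining the inner product g(X,Y) = Xᵀ g Y on ℝ^d, let J be any real d×d matrix, and set 𝐁 = g⁻¹(Jᵀ − J). Let β_1, …, β_s > 0 and let u_1, v_1, …, u_s, v_s ∈ ℝ^d be a g-orthonormal family (g(u_i,u_j) = δ_{ij}, g(v_i,v_j) = δ_{ij}, g(u_i,v_j) = 0 for all i,j) satisfying 𝐁u_i = −β_i v_i and 𝐁v_i = β_i u_i. Define f_i = β_i^{-1/2}(u_i, Jᵀu_i) ∈ ℝ^{2d} and f'_i = β_i^{-1/2}(v_i, Jᵀv_i) ∈ ℝ^{2d}, and let ω₀((Q,P),(Q',P')) = ⟨P',Q⟩ − ⟨P,Q'⟩ on ℝ^d × ℝ^d. Then for all 1 ≤ i, j ≤ s: ω₀(f_i, f_j) = 0, ω₀(f'_i, f'_j) = 0, and ω₀(f_i, f'_j) = δ_{ij}. -/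

import Mathlib

open Matrix

noncomputable section

/-- The standard symplectic form on `ℝ^d × ℝ^d`:
`ω₀((Q,P),(Q',P')) = ⟨P',Q⟩ − ⟨P,Q'⟩`. -/
def omega0 {d : ℕ} (p p' : (Fin d → ℝ) × (Fin d → ℝ)) : ℝ :=
  p'.2 ⬝ᵥ p.1 - p.2 ⬝ᵥ p'.1

/-!
The vectors `(x, Jᵀx)` form the `ω₀`-orthogonal complement of the graph `{(x, Jx)}` of `J`.
On this complement `ω₀` restricts to the magnetic form `⟨x, (Jᵀ − J)y⟩ = g(x, 𝐁y)`, so an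
eigenframe of `𝐁` turns the values of `ω₀` into `β`-multiples of `g`-inner products, and the factors
`β_i^{-1/2}` normalise the remaining ones to `1`.
-/

theorem omega0_smul_smul {d : ℕ} (a b : ℝ) (p q : (Fin d → ℝ) × (Fin d → ℝ)) :
    omega0 (a • p) (b • q) = a * b * omega0 p q := by
  simp only [omega0, Prod.smul_fst, Prod.smul_snd, smul_dotProduct, dotProduct_smul, smul_eq_mul]
  ring

theorem omega0_transpose_mulVec {d : ℕ} (J : Matrix (Fin d) (Fin d) ℝ) (x y : Fin d → ℝ) :
    omega0 (x, Jᵀ *ᵥ x) (y, Jᵀ *ᵥ y) = x ⬝ᵥ ((Jᵀ - J) *ᵥ y) := by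
  rw [omega0, dotProduct_comm (Jᵀ *ᵥ y), dotProduct_comm (Jᵀ *ᵥ x), dotProduct_transpose_mulVec J y,
    sub_mulVec, dotProduct_sub]

theorem dotProduct_mulVec_of_inv_mul_mulVec_eq_smul {n R : Type*} [Fintype n] [DecidableEq n]
    [CommRing R] {g K : Matrix n n R} (hg : IsUnit g.det) {c : R} {y z : n → R}
    (hy : (g⁻¹ * K) *ᵥ y = c • z) (x : n → R) :
    x ⬝ᵥ (K *ᵥ y) = c * (x ⬝ᵥ (g *ᵥ z)) := by
  rw [← mul_nonsing_inv_cancel_left g K hg, ← mulVec_mulVec, hy, mulVec_smul, dotProduct_smul,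
    smul_eq_mul]

theorem omega0_smul_transpose_mulVec_of_eq_smul {d : ℕ} {g J : Matrix (Fin d) (Fin d) ℝ}
    (hg : IsUnit g.det) {c : ℝ} {y z : Fin d → ℝ} (hy : (g⁻¹ * (Jᵀ - J)) *ᵥ y = c • z)
    (a b : ℝ) (x : Fin d → ℝ) :
    omega0 (a • (x, Jᵀ *ᵥ x)) (b • (y, Jᵀ *ᵥ y)) = a * b * (c * (x ⬝ᵥ (g *ᵥ z))) := by
  rw [omega0_smul_smul, omega0_transpose_mulVec,
    dotProduct_mulVec_of_inv_mul_mulVec_eq_smul hg hy]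

theorem inv_sqrt_mul_inv_sqrt_mul_self {b : ℝ} (hb : 0 < b) :
    (Real.sqrt b)⁻¹ * (Real.sqrt b)⁻¹ * b = 1 := by
  rw [← mul_inv, Real.mul_self_sqrt hb.le, inv_mul_cancel₀ hb.ne']

theorem symplectic_frame_of_eigenframe_general {d : ℕ} {ι : Type*} [DecidableEq ι]
    (g J : Matrix (Fin d) (Fin d) ℝ)
    (hgs : g.IsSymm) (hg : IsUnit g.det)
    (β : ι → ℝ) (hβ : ∀ i, 0 < β i)
    (u v : ι → (Fin d → ℝ))
    (huu : ∀ i j, u i ⬝ᵥ (g *ᵥ u j) = if i = j then 1 else 0)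
    (huv : ∀ i j, u i ⬝ᵥ (g *ᵥ v j) = 0)
    (hBu : ∀ i, (g⁻¹ * (Jᵀ - J)) *ᵥ u i = (-(β i)) • v i)
    (hBv : ∀ i, (g⁻¹ * (Jᵀ - J)) *ᵥ v i = (β i) • u i)
    (f f' : ι → (Fin d → ℝ) × (Fin d → ℝ))
    (hf : ∀ i, f i = (Real.sqrt (β i))⁻¹ • ((u i, Jᵀ *ᵥ u i) : (Fin d → ℝ) × (Fin d → ℝ)))
    (hf' : ∀ i, f' i = (Real.sqrt (β i))⁻¹ • ((v i, Jᵀ *ᵥ v i) : (Fin d → ℝ) × (Fin d → ℝ))) :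
    (∀ i j, omega0 (f i) (f j) = 0) ∧
    (∀ i j, omega0 (f' i) (f' j) = 0) ∧
    (∀ i j, omega0 (f i) (f' j) = if i = j then 1 else 0) := by
  have hvu (i j) : v i ⬝ᵥ (g *ᵥ u j) = 0 := by
    rw [← hgs.eq, dotProduct_transpose_mulVec, huv]
  refine ⟨fun i j => ?_, fun i j => ?_, fun i j => ?_⟩
  · rw [hf, hf, omega0_smul_transpose_mulVec_of_eq_smul hg (hBu j), huv, mul_zero, mul_zero]
  · rw [hf', hf', omega0_smul_transpose_mulVec_of_eq_smul hg (hBv j), hvu, mul_zero, mul_zero]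
  · rw [hf, hf', omega0_smul_transpose_mulVec_of_eq_smul hg (hBv j), huu]
    rcases eq_or_ne i j with rfl | hij
    · rw [if_pos rfl, mul_one, inv_sqrt_mul_inv_sqrt_mul_self (hβ i)]
    · rw [if_neg hij, mul_zero, mul_zero]

/-- The vectors `f_i = β_i^{-1/2}(u_i, Jᵀu_i)`, `f'_i = β_i^{-1/2}(v_i, Jᵀv_i)` built
from a `g`-orthonormal eigenframe of `𝐁 = g⁻¹(Jᵀ − J)` form a symplectic family:
`ω₀(f_i,f_j) = 0`, `ω₀(f'_i,f'_j) = 0`, `ω₀(f_i,f'_j) = δ_{ij}`. -/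
theorem symplectic_frame_of_eigenframe {d s : ℕ}
    (g J : Matrix (Fin d) (Fin d) ℝ)
    (hgs : g.IsSymm) (hgpd : g.PosDef)
    (β : Fin s → ℝ) (hβ : ∀ i, 0 < β i)
    (u v : Fin s → (Fin d → ℝ))
    (huu : ∀ i j, u i ⬝ᵥ (g *ᵥ u j) = if i = j then 1 else 0)
    (hvv : ∀ i j, v i ⬝ᵥ (g *ᵥ v j) = if i = j then 1 else 0)
    (huv : ∀ i j, u i ⬝ᵥ (g *ᵥ v j) = 0)
    (hBu : ∀ i, (g⁻¹ * (Jᵀ - J)) *ᵥ u i = (-(β i)) • v i)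
    (hBv : ∀ i, (g⁻¹ * (Jᵀ - J)) *ᵥ v i = (β i) • u i)
    (f f' : Fin s → (Fin d → ℝ) × (Fin d → ℝ))
    (hf : ∀ i, f i = (Real.sqrt (β i))⁻¹ • ((u i, Jᵀ *ᵥ u i) : (Fin d → ℝ) × (Fin d → ℝ)))
    (hf' : ∀ i, f' i = (Real.sqrt (β i))⁻¹ • ((v i, Jᵀ *ᵥ v i) : (Fin d → ℝ) × (Fin d → ℝ))) :
    (∀ i j, omega0 (f i) (f j) = 0) ∧
    (∀ i j, omega0 (f' i) (f' j) = 0) ∧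
    (∀ i j, omega0 (f i) (f' j) = if i = j then 1 else 0) :=
  symplectic_frame_of_eigenframe_general g J hgs (g.isUnit_iff_isUnit_det.1 hgpd.isUnit) β hβ u v
    huu huv hBu hBv f f' hf hf'
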